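/- arXiv:2307.11680 — 7 statements merged into one kernel-verified Lean document; each statement's English description precedes it below -/
import Mathlib

section
/- Let X be a nonempty finite set, d a natural number, and A : Fin (d+1) → Matrix X X ℂ a commutative d-class association scheme on X with Bose–Mesner algebra M (the ℂ-linear span of {A 0, …, A d}). If B ∈ M has exactly d+1 distinct eigenvalues (its spectrum over ℂ has cardinality d+1), then the matrices B^0, B^1, …, B^d are linearly independent over ℂ and M equals the ℂ-linear span of {B^0, B^1, …, B^d}; in particular every element of M is a polynomial in B. -/
open Matrix Polynomial BigOperators

/-- The all-ones matrix `J`. -/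
def allOnes (X : Type*) [Fintype X] : Matrix X X ℂ := Matrix.of fun _ _ => 1

/-- A commutative `d`-class association scheme on a finite set `X`:
a family of 0-1 matrices containing the identity, summing to the all-ones
matrix, closed under transpose, whose pairwise products lie in the linear
span of the family (the Bose–Mesner algebra) and commute. -/
structure IsCommAssocScheme {X : Type*} [Fintype X] [DecidableEq X] (d : ℕ)
    (A : Fin (d + 1) → Matrix X X ℂ) : Prop where
  zero_one : ∀ i x y, A i x y = 0 ∨ A i x y = 1
  a_zero : A 0 = 1
  sum_eq : ∑ i, A i = allOnes X
  transpose_mem : ∀ i, ∃ j, (A i)ᵀ = A j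
  mul_mem : ∀ i j, A i * A j ∈ Submodule.span ℂ (Set.range A)
  comm : ∀ i j, A i * A j = A j * A i

/-- If `B` in the Bose–Mesner algebra `M` has exactly `d+1` distinct eigenvalues,
then `B^0, …, B^d` are linearly independent and `M` equals their span; in
particular every element of `M` is a polynomial in `B`. -/
theorem stmt_0 {X : Type*} [Fintype X] [DecidableEq X] [Nonempty X] {d : ℕ}
    (A : Fin (d + 1) → Matrix X X ℂ) (hA : IsCommAssocScheme d A)
    (B : Matrix X X ℂ) (hB : B ∈ Submodule.span ℂ (Set.range A))
    (hspec : (spectrum ℂ B).ncard = d + 1) :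
    LinearIndependent ℂ (fun i : Fin (d + 1) => B ^ (i : ℕ)) ∧
    Submodule.span ℂ (Set.range A)
      = Submodule.span ℂ (Set.range fun i : Fin (d + 1) => B ^ (i : ℕ)) ∧
    ∀ C ∈ Submodule.span ℂ (Set.range A), ∃ p : Polynomial ℂ, aeval B p = C := by
  classical
  have hone : (1 : Matrix X X ℂ) ∈ Submodule.span ℂ (Set.range A) :=
    Submodule.subset_span ⟨0, hA.a_zero⟩
  have hmul : ∀ C D, C ∈ Submodule.span ℂ (Set.range A) → D ∈ Submodule.span ℂ (Set.range A) →
      C * D ∈ Submodule.span ℂ (Set.range A) := by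
    intro C D hC hD
    have h := Submodule.mul_mem_mul hC hD
    rw [Submodule.span_mul_span] at h
    refine (Submodule.span_le.2 ?_) h
    rintro _ ⟨_, ⟨i, rfl⟩, _, ⟨j, rfl⟩, rfl⟩
    exact hA.mul_mem i j
  have hpow : ∀ n : ℕ, B ^ n ∈ Submodule.span ℂ (Set.range A) := by
    intro n
    induction n with
    | zero => simpa using hone
    | succ k ih => rw [pow_succ]; exact hmul _ _ ih hB
  have hint : IsIntegral ℂ B := Algebra.IsIntegral.isIntegral B
  have hne : minpoly ℂ B ≠ 0 := minpoly.ne_zero hint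
  have hsub : spectrum ℂ B ⊆ ((minpoly ℂ B).roots.toFinset : Set ℂ) := by
    intro μ hμ
    have h := spectrum.subset_polynomial_aeval B (minpoly ℂ B) ⟨μ, hμ, rfl⟩
    rw [minpoly.aeval, spectrum.zero_eq] at h
    simpa [hne] using h
  have hdeg : d + 1 ≤ (minpoly ℂ B).natDegree := by
    rw [← hspec]
    refine (Set.ncard_le_ncard hsub (Finset.finite_toSet _)).trans ?_
    rw [Set.ncard_coe_finset]
    exact (Multiset.toFinset_card_le _).trans (Polynomial.card_roots' _)
  have hli : LinearIndependent ℂ (fun i : Fin (d + 1) => B ^ (i : ℕ)) :=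
    (linearIndependent_pow (K := ℂ) B).comp (Fin.castLE hdeg) (Fin.castLE_injective hdeg)
  have hspan : Submodule.span ℂ (Set.range A)
      = Submodule.span ℂ (Set.range fun i : Fin (d + 1) => B ^ (i : ℕ)) := by
    symm
    apply Submodule.eq_of_le_of_finrank_le
    · rw [Submodule.span_le]
      rintro _ ⟨i, rfl⟩
      exact hpow i
    · rw [finrank_span_eq_card hli]
      exact finrank_range_le_card A
  refine ⟨hli, hspan, ?_⟩
  intro C hC
  rw [hspan] at hC
  have hle : Submodule.span ℂ (Set.range fun i : Fin (d + 1) => B ^ (i : ℕ))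
      ≤ LinearMap.range (aeval (R := ℂ) B).toLinearMap := by
    rw [Submodule.span_le]
    rintro _ ⟨i, rfl⟩
    exact ⟨Polynomial.X ^ (i : ℕ), by simp⟩
  obtain ⟨p, hp⟩ := hle hC
  exact ⟨p, hp⟩
end

section
/- Let X be a nonempty finite set and A : Fin (d+1) → Matrix X X ℂ a commutative d-class association scheme on X with Bose–Mesner algebra M. If B ∈ M is a matrix all of whose entries are 0 or 1 and B has exactly d+1 distinct eigenvalues, then for all vertices x, y ∈ X there exists ℓ with 0 ≤ ℓ ≤ d such that (B^ℓ) x y ≠ 0; in particular the digraph Γ(B) (with an arc from x to y iff B x y = 1) is strongly connected. -/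
open Matrix Polynomial BigOperators

/-- If a 0-1 matrix `B` in the Bose–Mesner algebra has exactly `d+1` distinct
eigenvalues, then for all `x y` there is `ℓ ≤ d` with `(B^ℓ) x y ≠ 0`;
in particular the digraph `Γ(B)` is strongly connected. -/
theorem stmt_1 {X : Type*} [Fintype X] [DecidableEq X] [Nonempty X] {d : ℕ}
    (A : Fin (d + 1) → Matrix X X ℂ) (hA : IsCommAssocScheme d A)
    (B : Matrix X X ℂ) (hB : B ∈ Submodule.span ℂ (Set.range A))
    (h01 : ∀ x y, B x y = 0 ∨ B x y = 1)
    (hspec : (spectrum ℂ B).ncard = d + 1) :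
    ∀ x y : X, ∃ ℓ : ℕ, ℓ ≤ d ∧ (B ^ ℓ) x y ≠ 0 := by
  intro x y
  have hmul : ∀ P ∈ Submodule.span ℂ (Set.range A), ∀ Q ∈ Submodule.span ℂ (Set.range A),
      P * Q ∈ Submodule.span ℂ (Set.range A) := by
    intro P hP Q hQ
    have h := Submodule.mul_mem_mul hP hQ
    rw [Submodule.span_mul_span] at h
    refine (Submodule.span_le.2 ?_) h
    rintro _ ⟨_, ⟨i, rfl⟩, _, ⟨j, rfl⟩, rfl⟩
    exact hA.mul_mem i j
  have hpow : ∀ n : ℕ, B ^ n ∈ Submodule.span ℂ (Set.range A) := by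
    intro n
    induction n with
    | zero => rw [pow_zero, ← hA.a_zero]; exact Submodule.subset_span ⟨0, rfl⟩
    | succ k ih => rw [pow_succ]; exact hmul _ ih _ hB
  have hint : IsIntegral ℂ B := Algebra.IsIntegral.isIntegral B
  have hne : minpoly ℂ B ≠ 0 := minpoly.ne_zero hint
  have hsub : spectrum ℂ B ⊆ ((minpoly ℂ B).roots.toFinset : Set ℂ) := by
    intro μ hμ
    have h := spectrum.subset_polynomial_aeval B (minpoly ℂ B) ⟨μ, hμ, rfl⟩
    rw [minpoly.aeval, spectrum.zero_eq] at h
    simpa [hne] using h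
  have hdeg : d + 1 ≤ (minpoly ℂ B).natDegree := by
    rw [← hspec]
    refine (Set.ncard_le_ncard hsub (Finset.finite_toSet _)).trans ?_
    rw [Set.ncard_coe_finset]
    exact (Multiset.toFinset_card_le _).trans (Polynomial.card_roots' _)
  have hli : LinearIndependent ℂ (fun i : Fin (d + 1) => B ^ (i : ℕ)) :=
    (linearIndependent_pow (K := ℂ) B).comp (Fin.castLE hdeg) (Fin.castLE_injective hdeg)
  have hspan : Submodule.span ℂ (Set.range fun i : Fin (d + 1) => B ^ (i : ℕ))
      = Submodule.span ℂ (Set.range A) := by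
    refine Submodule.eq_of_le_of_finrank_le ?_ ?_
    · rw [Submodule.span_le]
      rintro _ ⟨i, rfl⟩
      exact hpow i
    · rw [finrank_span_eq_card hli]
      exact finrank_range_le_card A
  have hJ : allOnes X ∈ Submodule.span ℂ (Set.range fun i : Fin (d + 1) => B ^ (i : ℕ)) := by
    rw [hspan, ← hA.sum_eq]
    exact Submodule.sum_mem _ fun i _ => Submodule.subset_span ⟨i, rfl⟩
  obtain ⟨c, hc⟩ := (Submodule.mem_span_range_iff_exists_fun ℂ).1 hJ
  by_contra! hcon
  have h1 := congrFun (congrFun hc x) y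
  rw [Matrix.sum_apply, Finset.sum_eq_zero] at h1
  · simp [allOnes] at h1
  · intro i _
    rw [Matrix.smul_apply, hcon i (Nat.lt_succ_iff.1 i.2), smul_zero]
end

section
/- Let X be a nonempty finite set and A : Fin (d+1) → Matrix X X ℂ a commutative d-class association scheme on X with Bose–Mesner algebra M. Let B ∈ M be a matrix all of whose entries are 0 or 1. Then there exists a polynomial H ∈ ℂ[t] with J = H(B) (J the all-ones matrix) if and only if the digraph Γ(B) is strongly connected, i.e., for all x, y ∈ X there exists ℓ ≥ 0 with (B^ℓ) x y ≠ 0. -/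
open Matrix Polynomial BigOperators

lemma aux_real {X : Type*} [Fintype X] [DecidableEq X] [Nonempty X]
    (B : Matrix X X ℂ) (h01 : ∀ x y, B x y = 0 ∨ B x y = 1)
    (hc : ∀ x y : X, ∃ l : ℕ, (B ^ l) x y ≠ 0) (u : X → ℝ)
    (hu : ∀ x, ∑ y, (B x y).re * (u x - u y) = 0) : ∀ x y, u x = u y := by
  obtain ⟨m, hm⟩ := Finite.exists_max u
  have step : ∀ x y, u x = u m → B x y ≠ 0 → u y = u m := by
    intro x y hx hxy
    have h1 := (Finset.sum_eq_zero_iff_of_nonneg (s := Finset.univ)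
      (f := fun y => (B x y).re * (u x - u y)) (by
        intro z _
        have : 0 ≤ (B x z).re := by rcases h01 x z with h | h <;> simp [h]
        exact mul_nonneg this (by linarith [hm z]))).1 (hu x) y (Finset.mem_univ _)
    have h2 : B x y = 1 := (h01 x y).resolve_left hxy
    simp [h2] at h1
    linarith
  have walk : ∀ l : ℕ, ∀ y, (B ^ l) m y ≠ 0 → u y = u m := by
    intro l
    induction l with
    | zero =>
      intro y hy
      by_cases h : m = y
      · rw [h]
      · simp [Matrix.one_apply, h] at hy
    | succ l ih =>
      intro y hy
      rw [pow_succ, Matrix.mul_apply] at hy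
      obtain ⟨z, _, hz⟩ := Finset.exists_ne_zero_of_sum_ne_zero hy
      exact step z y (ih z (left_ne_zero_of_mul hz)) (right_ne_zero_of_mul hz)
  have all : ∀ y, u y = u m := fun y => by
    obtain ⟨l, hl⟩ := hc m y
    exact walk l y hl
  intro x y
  rw [all x, all y]

lemma aux_complex {X : Type*} [Fintype X] [DecidableEq X] [Nonempty X]
    (B : Matrix X X ℂ) (h01 : ∀ x y, B x y = 0 ∨ B x y = 1)
    (hc : ∀ x y : X, ∃ l : ℕ, (B ^ l) x y ≠ 0) (v : X → ℂ)
    (hv : ∀ x, ∑ y, B x y * (v x - v y) = 0) : ∀ x y, v x = v y := by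
  have him : ∀ x y, (B x y).im = 0 := by
    intro x y
    rcases h01 x y with h | h <;> simp [h]
  intro x y
  apply Complex.ext
  · refine aux_real B h01 hc (fun x => (v x).re) (fun x => ?_) x y
    have := congrArg Complex.re (hv x)
    simpa [Complex.re_sum, Complex.mul_re, him] using this
  · refine aux_real B h01 hc (fun x => (v x).im) (fun x => ?_) x y
    have := congrArg Complex.im (hv x)
    simpa [Complex.im_sum, Complex.mul_im, him] using this

/-- For a 0-1 matrix `B` in the Bose–Mesner algebra, the all-ones matrix `J`
is a polynomial in `B` iff the digraph `Γ(B)` is strongly connected. -/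
theorem stmt_3 {X : Type*} [Fintype X] [DecidableEq X] [Nonempty X] {d : ℕ}
    (A : Fin (d + 1) → Matrix X X ℂ) (hA : IsCommAssocScheme d A)
    (B : Matrix X X ℂ) (hB : B ∈ Submodule.span ℂ (Set.range A))
    (h01 : ∀ x y, B x y = 0 ∨ B x y = 1) :
    (∃ H : Polynomial ℂ, aeval B H = allOnes X) ↔
      (∀ x y : X, ∃ ℓ : ℕ, (B ^ ℓ) x y ≠ 0) := by
  constructor
  · rintro ⟨H, hH⟩ x y
    by_contra! hcon
    have h1 := congrFun (congrFun hH x) y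
    rw [aeval_eq_sum_range, Matrix.sum_apply] at h1
    simp [hcon, allOnes] at h1
  · intro hc
    have hcomm : Commute B (allOnes X) := by
      rw [← hA.sum_eq]
      clear hc h01
      induction hB using Submodule.span_induction with
      | mem x hx =>
        obtain ⟨i, rfl⟩ := hx
        exact Commute.sum_right _ _ _ fun j _ => hA.comm i j
      | zero => exact Commute.zero_left _
      | add x y _ _ hx hy => exact hx.add_left hy
      | smul a x _ hx => exact hx.smul_left a
    have sums : ∀ C : Matrix X X ℂ, Commute C (allOnes X) →
        ∀ x y, ∑ z, C x z = ∑ z, C z y := by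
      intro C hC x y
      have := congrFun (congrFun hC.eq x) y
      simpa [Matrix.mul_apply, allOnes] using this
    obtain ⟨x0⟩ := ‹Nonempty X›
    haveI : Nonempty X := ⟨x0⟩
    set k : ℂ := ∑ z, B z x0 with hk
    have hrow : ∀ x, ∑ z, B x z = k := fun x => sums B hcomm x x0
    have hBJ : (B - algebraMap ℂ _ k) * allOnes X = 0 := by
      ext x y
      simp [sub_mul, Matrix.mul_apply, allOnes, hrow, Algebra.algebraMap_eq_smul_one,
        Matrix.one_apply]
    have hint : IsIntegral ℂ B := Algebra.IsIntegral.isIntegral B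
    have hp0 : minpoly ℂ B ≠ 0 := minpoly.ne_zero hint
    have hroot : (minpoly ℂ B).IsRoot k := by
      obtain ⟨r, hr⟩ := X_sub_C_dvd_sub_C_eval (a := k) (p := minpoly ℂ B)
      have h1 := congrArg (aeval B) hr
      rw [mul_comm] at h1
      simp only [map_sub, map_mul, minpoly.aeval, aeval_C, aeval_X, zero_sub] at h1
      have h2 := congrArg (fun M => (M * allOnes X) x0 x0) h1
      simp only [mul_assoc, hBJ, mul_zero] at h2
      simpa [Algebra.algebraMap_eq_smul_one, allOnes, IsRoot] using h2
    obtain ⟨q, hq⟩ := dvd_iff_isRoot.2 hroot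
    have hq0 : q ≠ 0 := by
      rintro rfl
      exact hp0 (by simpa using hq)
    have hQ0 : aeval B q ≠ 0 := by
      intro h
      have h1 := minpoly.degree_le_of_ne_zero ℂ B hq0 h
      rw [hq, degree_mul, degree_X_sub_C, degree_eq_natDegree hq0] at h1
      norm_cast at h1
      omega
    have hQ : (B - algebraMap ℂ _ k) * aeval B q = 0 := by
      have := minpoly.aeval ℂ B
      rw [hq] at this
      simpa using this
    have hQcomm : Commute (aeval B q) (allOnes X) := by
      rw [aeval_eq_sum_range]
      exact Commute.sum_left _ _ _ fun i _ => (hcomm.pow_left i).smul_left _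
    have hcol : ∀ y x x', aeval B q x y = aeval B q x' y := by
      intro y
      refine aux_complex B h01 hc (fun x => aeval B q x y) (fun x => ?_)
      have := congrFun (congrFun hQ x) y
      rw [sub_mul, Matrix.sub_apply, Matrix.mul_apply, Algebra.algebraMap_eq_smul_one,
        smul_mul_assoc, one_mul, Matrix.smul_apply, Matrix.zero_apply] at this
      simp only [mul_sub, Finset.sum_sub_distrib, ← Finset.sum_mul, hrow]
      rw [smul_eq_mul] at this
      linear_combination -this
    have hconst : ∀ x y, aeval B q x y = aeval B q x0 x0 := by
      intro x y
      have h1 := sums _ hQcomm x0 y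
      rw [sums _ hQcomm x0 x0, Finset.sum_congr rfl (fun z _ => hcol x0 z x0),
        Finset.sum_congr rfl (fun z _ => hcol y z x)] at h1
      simpa using h1.symm
    have hcne : aeval B q x0 x0 ≠ 0 := by
      intro h
      apply hQ0
      ext x y
      rw [hconst, h, Matrix.zero_apply]
    refine ⟨C (aeval B q x0 x0)⁻¹ * q, ?_⟩
    ext x y
    rw [map_mul, aeval_C, Algebra.algebraMap_eq_smul_one, smul_mul_assoc, one_mul,
      Matrix.smul_apply, hconst x y]
    simp [allOnes, hcne]
end

section
/- Let k, r, s, w be real numbers with k > 0 and let N be an integer with N > 1. Assume either (a) (conference case) w = 2k + 1, r = (-1 + √w)/2 and s = (-1 - √w)/2; or (b) r and s are integers with r ≥ 1, s ≤ -2, k > r, k + r·s > 0, w = (k - r)(k - s)/(k + r·s), and w > k. Then the four real numbers k + (N - 1)·w, k - w, r, s are pairwise distinct, and the four real numbers -1 - k + N·w, -1 - k, -1 - r, -1 - s are pairwise distinct. -/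
/-- Distinctness of the eigenvalue lists of the union graphs `G_{1,3}` and
`G_{2,3}` arising from a symmetric 3-class scheme whose first relation is a
disjoint union of `N > 1` connected non-complete strongly regular graphs,
in both the conference case (a) and the integer-eigenvalue case (b). -/
theorem stmt_12 (k r s w : ℝ) (N : ℤ) (hk : 0 < k) (hN : 1 < N)
    (hcase :
      (w = 2 * k + 1 ∧ r = (-1 + Real.sqrt w) / 2 ∧ s = (-1 - Real.sqrt w) / 2) ∨
      ((∃ ri : ℤ, r = ri) ∧ (∃ si : ℤ, s = si) ∧ 1 ≤ r ∧ s ≤ -2 ∧ r < k ∧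
        0 < k + r * s ∧ w = (k - r) * (k - s) / (k + r * s) ∧ k < w)) :
    List.Pairwise (· ≠ ·) [k + ((N : ℝ) - 1) * w, k - w, r, s] ∧
    List.Pairwise (· ≠ ·) [-1 - k + (N : ℝ) * w, -1 - k, -1 - r, -1 - s] := by
  have key : k - s < w ∧ r < k ∧ s < r ∧ 0 < w := by
    rcases hcase with ⟨hw, hr, hs⟩ | ⟨-, -, hr, hs, hrk, hpos, hw, hkw⟩
    · have hw1 : 1 < w := by linarith
      have ht : 1 < Real.sqrt w := by
        rw [Real.lt_sqrt (by norm_num)]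
        linarith
      have hsq : Real.sqrt w * Real.sqrt w = w := Real.mul_self_sqrt (by linarith)
      refine ⟨?_, ?_, ?_, ?_⟩ <;> nlinarith
    · refine ⟨?_, hrk, by linarith, by linarith⟩
      rw [hw, lt_div_iff₀ hpos, mul_comm (k - r)]
      apply mul_lt_mul_of_pos_left _ (by linarith)
      nlinarith
  obtain ⟨h1, h2, h3, h4⟩ := key
  have hN2 : (2 : ℝ) ≤ N := by exact_mod_cast hN
  have hNw : 2 * w ≤ N * w := mul_le_mul_of_nonneg_right hN2 h4.le
  have e : ((N : ℝ) - 1) * w = N * w - w := by ring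
  rw [e]
  generalize (N : ℝ) * w = M at *
  simp only [List.pairwise_cons, List.mem_cons, List.not_mem_nil, or_false, forall_eq_or_imp,
    forall_eq, List.Pairwise.nil, and_true, false_imp_iff, implies_true]
  refine ⟨⟨⟨?_, ?_, ?_⟩, ⟨?_, ?_⟩, ?_⟩, ⟨?_, ?_, ?_⟩, ⟨?_, ?_⟩, ?_⟩ <;> intro h <;> linarith
end

section
/- Let X be a nonempty finite set, A : Fin (d+1) → Matrix X X ℂ a commutative d-class association scheme on X with Bose–Mesner algebra M, and B ∈ M a matrix all of whose entries are 0 or 1 such that the digraph Γ(B) is strongly connected (for all x, y there exists ℓ ≥ 0 with (B^ℓ) x y ≠ 0). Define ∂(x,y) to be the least ℓ ≥ 0 with (B^ℓ) x y ≠ 0. Then for every i ∈ Fin (d+1) and all vertices x, z, w ∈ X with (A i) x z = 1 and (A i) x w = 1, one has ∂(x,z) = ∂(x,w); that is, all vertices of the cell P_i(x) = { z : (A i) x z = 1 } are at the same distance from x in Γ(B). -/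
open Matrix Polynomial BigOperators

/-- The distance `∂(x,y)` in the digraph `Γ(B)`: the least `ℓ ≥ 0` with
`(B^ℓ) x y ≠ 0`. -/
noncomputable def bdist {X : Type*} [Fintype X] [DecidableEq X]
    (B : Matrix X X ℂ) (x y : X) : ℕ :=
  sInf {ℓ : ℕ | (B ^ ℓ) x y ≠ 0}

theorem scheme_other_zero {X : Type*} [Fintype X] [DecidableEq X] {d : ℕ}
    {A : Fin (d + 1) → Matrix X X ℂ} (hA : IsCommAssocScheme d A)
    {i j : Fin (d + 1)} {x z : X} (h : A i x z = 1) (hij : j ≠ i) : A j x z = 0 := by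
  have hs : ∑ k, A k x z = 1 := by
    have := congrFun (congrFun hA.sum_eq x) z
    simpa [Matrix.sum_apply, allOnes] using this
  rw [← Finset.add_sum_erase _ _ (Finset.mem_univ i), h] at hs
  have h0 : ∑ k ∈ Finset.univ.erase i, A k x z = 0 := by simpa using hs
  have h1 : ∑ k ∈ Finset.univ.erase i, (A k x z).re = 0 := by
    rw [← Complex.re_sum, h0, Complex.zero_re]
  have h2 := (Finset.sum_eq_zero_iff_of_nonneg (fun k _ => by
    rcases hA.zero_one k x z with h | h <;> simp [h])).1 h1 j (by simp [hij])
  rcases hA.zero_one j x z with h | h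
  · exact h
  · simp [h] at h2

theorem span_const {X : Type*} [Fintype X] [DecidableEq X] {d : ℕ}
    {A : Fin (d + 1) → Matrix X X ℂ} (hA : IsCommAssocScheme d A)
    {i : Fin (d + 1)} {x z w : X} (hz : A i x z = 1) (hw : A i x w = 1)
    {M : Matrix X X ℂ} (hM : M ∈ Submodule.span ℂ (Set.range A)) : M x z = M x w := by
  induction hM using Submodule.span_induction with
  | mem M h =>
    obtain ⟨j, rfl⟩ := h
    by_cases hij : j = i
    · subst hij; rw [hz, hw]
    · rw [scheme_other_zero hA hz hij, scheme_other_zero hA hw hij]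
  | zero => rfl
  | add M N _ _ h1 h2 => simp [h1, h2]
  | smul c M _ h => simp [h]

theorem span_mul {X : Type*} [Fintype X] [DecidableEq X] {d : ℕ}
    {A : Fin (d + 1) → Matrix X X ℂ} (hA : IsCommAssocScheme d A)
    {M N : Matrix X X ℂ} (hM : M ∈ Submodule.span ℂ (Set.range A))
    (hN : N ∈ Submodule.span ℂ (Set.range A)) : M * N ∈ Submodule.span ℂ (Set.range A) := by
  have h := Submodule.mul_mem_mul hM hN
  rw [Submodule.span_mul_span] at h
  refine Submodule.span_le.2 ?_ h
  rintro _ ⟨_, ⟨i, rfl⟩, _, ⟨j, rfl⟩, rfl⟩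
  exact hA.mul_mem i j

theorem span_pow {X : Type*} [Fintype X] [DecidableEq X] {d : ℕ}
    {A : Fin (d + 1) → Matrix X X ℂ} (hA : IsCommAssocScheme d A)
    {M : Matrix X X ℂ} (hM : M ∈ Submodule.span ℂ (Set.range A)) (n : ℕ) :
    M ^ n ∈ Submodule.span ℂ (Set.range A) := by
  induction n with
  | zero =>
    rw [pow_zero, ← hA.a_zero]
    exact Submodule.subset_span ⟨0, rfl⟩
  | succ n ih =>
    rw [pow_succ]
    exact span_mul hA ih hM

/-- For a 0-1 matrix `B` in the Bose–Mesner algebra whose digraph is strongly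
connected, all vertices of the cell `P_i(x) = {z : (A i) x z = 1}` are at the
same distance from `x` in `Γ(B)`. -/
theorem stmt_13 {X : Type*} [Fintype X] [DecidableEq X] [Nonempty X] {d : ℕ}
    (A : Fin (d + 1) → Matrix X X ℂ) (hA : IsCommAssocScheme d A)
    (B : Matrix X X ℂ) (hB : B ∈ Submodule.span ℂ (Set.range A))
    (h01 : ∀ x y, B x y = 0 ∨ B x y = 1)
    (hconn : ∀ x y : X, ∃ ℓ : ℕ, (B ^ ℓ) x y ≠ 0) :
    ∀ (i : Fin (d + 1)) (x z w : X), A i x z = 1 → A i x w = 1 →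
      bdist B x z = bdist B x w := by
  intro i x z w hz hw
  have h : ∀ n : ℕ, (B ^ n) x z = (B ^ n) x w := fun n =>
    span_const hA hz hw (span_pow hA hB n)
  simp only [bdist, h]
end

section
/- Let X be a nonempty finite set, A : Fin (d+1) → Matrix X X ℂ a commutative d-class association scheme on X with Bose–Mesner algebra M, and B ∈ M a matrix all of whose entries are 0 or 1 that generates M. Define ∂(x,y) to be the least ℓ ≥ 0 with (B^ℓ) x y ≠ 0 (which exists for all pairs). Then: (i) for every i ∈ Fin (d+1) and all x, y, u, v ∈ X, if (A i) x y = 1 and (A i) u v = 1 then ∂(x,y) = ∂(u,v); and (ii) for every h ≥ 0, the distance-h matrix A_h of Γ(B), defined by (A_h) x y = 1 if ∂(x,y) = h and 0 otherwise, belongs to M. -/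
open Matrix Polynomial BigOperators

/-- The distance-`h` matrix of the digraph `Γ(B)`. -/
noncomputable def distMatrix {X : Type*} [Fintype X] [DecidableEq X]
    (B : Matrix X X ℂ) (h : ℕ) : Matrix X X ℂ :=
  Matrix.of fun x y => if bdist B x y = h then 1 else 0

/-- If `A i x y = 1` then all other relations vanish at `(x, y)`. -/
theorem scheme_eq_ite {X : Type*} [Fintype X] [DecidableEq X] {d : ℕ}
    {A : Fin (d + 1) → Matrix X X ℂ} (hA : IsCommAssocScheme d A)
    {i : Fin (d + 1)} {x y : X} (h : A i x y = 1) (k : Fin (d + 1)) :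
    A k x y = if k = i then 1 else 0 := by
  classical
  split_ifs with hk
  · rw [hk, h]
  · rcases hA.zero_one k x y with h0 | h1
    · exact h0
    · exfalso
      have hs : ∑ j, A j x y = 1 := by
        have := congrFun (congrFun hA.sum_eq x) y
        simpa [Matrix.sum_apply, allOnes] using this
      have hc : ∀ j, A j x y = ((if A j x y = 1 then 1 else 0 : ℕ) : ℂ) := by
        intro j
        rcases hA.zero_one j x y with h | h <;> simp [h]
      rw [Finset.sum_congr rfl (fun j _ => hc j)] at hs
      have hs' : ∑ j, (if A j x y = 1 then 1 else 0 : ℕ) = 1 := by exact_mod_cast hs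
      have h2 : ∑ j ∈ ({k, i} : Finset (Fin (d + 1))), (if A j x y = 1 then 1 else 0 : ℕ)
          ≤ ∑ j, (if A j x y = 1 then 1 else 0 : ℕ) :=
        Finset.sum_le_sum_of_subset (Finset.subset_univ _)
      rw [Finset.sum_pair hk, hs'] at h2
      simp [h, h1] at h2

/-- Every pair lies in some relation. -/
theorem scheme_exists {X : Type*} [Fintype X] [DecidableEq X] {d : ℕ}
    {A : Fin (d + 1) → Matrix X X ℂ} (hA : IsCommAssocScheme d A) (x y : X) :
    ∃ i, A i x y = 1 := by
  by_contra! hn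
  have hz : ∀ i, A i x y = 0 := fun i => (hA.zero_one i x y).resolve_right (hn i)
  have := congrFun (congrFun hA.sum_eq x) y
  simp [Matrix.sum_apply, allOnes, hz] at this

/-- Elements of the Bose–Mesner algebra are constant on relations. -/
theorem scheme_const {X : Type*} [Fintype X] [DecidableEq X] {d : ℕ}
    {A : Fin (d + 1) → Matrix X X ℂ} (hA : IsCommAssocScheme d A)
    {C : Matrix X X ℂ} (hC : C ∈ Submodule.span ℂ (Set.range A))
    {i : Fin (d + 1)} {x y u v : X} (h : A i x y = 1) (h' : A i u v = 1) :
    C x y = C u v := by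
  induction hC using Submodule.span_induction with
  | mem C hC =>
    obtain ⟨k, rfl⟩ := hC
    rw [scheme_eq_ite hA h, scheme_eq_ite hA h']
  | zero => rfl
  | add C D _ _ h1 h2 => simp [h1, h2]
  | smul a C _ h1 => simp [h1]

/-- The Bose–Mesner algebra is closed under products. -/
theorem scheme_mul {X : Type*} [Fintype X] [DecidableEq X] {d : ℕ}
    {A : Fin (d + 1) → Matrix X X ℂ} (hA : IsCommAssocScheme d A)
    {C D : Matrix X X ℂ} (hC : C ∈ Submodule.span ℂ (Set.range A))
    (hD : D ∈ Submodule.span ℂ (Set.range A)) :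
    C * D ∈ Submodule.span ℂ (Set.range A) := by
  induction hC using Submodule.span_induction with
  | mem C hC =>
    obtain ⟨k, rfl⟩ := hC
    induction hD using Submodule.span_induction with
    | mem D hD =>
      obtain ⟨l, rfl⟩ := hD
      exact hA.mul_mem k l
    | zero => simp
    | add C D _ _ h1 h2 => rw [mul_add]; exact add_mem h1 h2
    | smul a C _ h1 => rw [mul_smul_comm]; exact Submodule.smul_mem _ _ h1
  | zero => simp
  | add C D _ _ h1 h2 => rw [add_mul]; exact add_mem h1 h2
  | smul a C _ h1 => rw [smul_mul_assoc]; exact Submodule.smul_mem _ _ h1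

/-- If a 0-1 matrix `B` generates the Bose–Mesner algebra `M` of a commutative
`d`-class association scheme, then (i) two pairs related by the same relation
`A i` lie at the same distance in `Γ(B)`, and (ii) every distance-`h` matrix
of `Γ(B)` belongs to `M`. -/
theorem stmt_18 {X : Type*} [Fintype X] [DecidableEq X] [Nonempty X] {d : ℕ}
    (A : Fin (d + 1) → Matrix X X ℂ) (hA : IsCommAssocScheme d A)
    (B : Matrix X X ℂ) (hB : B ∈ Submodule.span ℂ (Set.range A))
    (h01 : ∀ x y, B x y = 0 ∨ B x y = 1)
    (hgen : ∀ C ∈ Submodule.span ℂ (Set.range A),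
      ∃ p : Polynomial ℂ, aeval B p = C) :
    (∀ (i : Fin (d + 1)) (x y u v : X), A i x y = 1 → A i u v = 1 →
        bdist B x y = bdist B u v) ∧
    (∀ h : ℕ, distMatrix B h ∈ Submodule.span ℂ (Set.range A)) := by
  classical
  have hpow : ∀ l : ℕ, B ^ l ∈ Submodule.span ℂ (Set.range A) := by
    intro l
    induction l with
    | zero =>
      rw [pow_zero, ← hA.a_zero]
      exact Submodule.subset_span ⟨0, rfl⟩
    | succ l ih => rw [pow_succ]; exact scheme_mul hA ih hB
  have hi : ∀ (i : Fin (d + 1)) (x y u v : X), A i x y = 1 → A i u v = 1 →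
      bdist B x y = bdist B u v := by
    intro i x y u v h h'
    unfold bdist
    congr 1
    ext l
    simp only [Set.mem_setOf_eq]
    rw [scheme_const hA (hpow l) h h']
  refine ⟨hi, fun h => ?_⟩
  have key : distMatrix B h =
      ∑ i, (if ∃ x y, A i x y = 1 ∧ bdist B x y = h then (1 : ℂ) else 0) • A i := by
    ext x y
    obtain ⟨i, hxy⟩ := scheme_exists hA x y
    have hiff : (∃ u v, A i u v = 1 ∧ bdist B u v = h) ↔ bdist B x y = h := by
      constructor
      · rintro ⟨u, v, h1, h2⟩
        rw [hi i x y u v hxy h1, h2]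
      · exact fun h1 => ⟨x, y, hxy, h1⟩
    rw [Matrix.sum_apply, Finset.sum_eq_single i]
    · simp [distMatrix, hxy, hiff]
    · intro k _ hk
      simp [scheme_eq_ite hA hxy k, hk]
    · simp
  rw [key]
  exact Submodule.sum_mem _ fun i _ =>
    Submodule.smul_mem _ _ (Submodule.subset_span ⟨i, rfl⟩)
end

section
/- Let X be a nonempty finite set and B ∈ Matrix X X ℂ a matrix all of whose entries are 0 or 1 such that the digraph Γ(B) is strongly connected and B has exactly d+1 distinct eigenvalues. Define ∂(x,y) as the least ℓ ≥ 0 with (B^ℓ) x y ≠ 0, let Δ = { (∂(x,y), ∂(y,x)) : x, y ∈ X }, and for each pair p ∈ Δ let C_p ∈ Matrix X X ℂ be the 0-1 matrix with (C_p) x y = 1 iff (∂(x,y), ∂(y,x)) = p. Assume: B is normal (B * Bᵀ = Bᵀ * B, noting B has real 0-1 entries); Δ has exactly d+1 elements; and for every ℓ ≥ 0 and all x, y, u, v ∈ X, if (∂(x,y), ∂(y,x)) = (∂(u,v), ∂(v,u)) then (B^ℓ) x y = (B^ℓ) u v. Then the family { C_p : p ∈ Δ } is a commutative d-class association scheme on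 X, i.e.: C_(0,0) = 1; ∑_{p ∈ Δ} C_p = J; for each p ∈ Δ, (C_p)ᵀ = C_q for some q ∈ Δ; each product C_p * C_q is a ℂ-linear combination of the C_r, r ∈ Δ; and C_p * C_q = C_q * C_p for all p, q ∈ Δ. Moreover, the ℂ-linear span of { C_p : p ∈ Δ } equals the ℂ-linear span of { B^0, B^1, …, B^d }. -/
open Matrix Polynomial BigOperators

/-- The two-sided distance pattern of a pair of vertices. -/
noncomputable def pat {X : Type*} [Fintype X] [DecidableEq X]
    (B : Matrix X X ℂ) (x y : X) : ℕ × ℕ :=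
  (bdist B x y, bdist B y x)

/-- The 0-1 matrix of the relation `R_p = {(x,y) : (∂(x,y), ∂(y,x)) = p}`. -/
noncomputable def patMatrix {X : Type*} [Fintype X] [DecidableEq X]
    (B : Matrix X X ℂ) (p : ℕ × ℕ) : Matrix X X ℂ :=
  Matrix.of fun x y => if pat B x y = p then 1 else 0

lemma mem_span_patMatrix {X : Type*} [Fintype X] [DecidableEq X]
    (B M : Matrix X X ℂ)
    (hM : ∀ x y u v : X, pat B x y = pat B u v → M x y = M u v) :
    M ∈ Submodule.span ℂ (patMatrix B ''
      ↑(Finset.image (fun q : X × X => pat B q.1 q.2) Finset.univ)) := by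
  classical
  set D := Finset.image (fun q : X × X => pat B q.1 q.2) Finset.univ with hD
  have hex : ∀ p : ℕ × ℕ, ∃ c : ℂ, ∀ x y, pat B x y = p → M x y = c := by
    intro p
    by_cases h : ∃ u v, pat B u v = p
    · obtain ⟨u, v, h⟩ := h
      exact ⟨M u v, fun x y hxy => hM _ _ _ _ (hxy.trans h.symm)⟩
    · exact ⟨0, fun x y hxy => (h ⟨x, y, hxy⟩).elim⟩
  choose c hc using hex
  have hMe : M = ∑ p ∈ D, c p • patMatrix B p := by
    ext x y
    have hmem : pat B x y ∈ D := Finset.mem_image.2 ⟨(x, y), Finset.mem_univ _, rfl⟩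
    simp only [Matrix.sum_apply, Matrix.smul_apply, patMatrix, Matrix.of_apply, smul_eq_mul,
      mul_ite, mul_one, mul_zero, Finset.sum_ite_eq, hmem, if_true]
    exact hc _ x y rfl
  rw [hMe]
  exact Submodule.sum_mem _ fun p hp =>
    Submodule.smul_mem _ _ (Submodule.subset_span ⟨p, hp, rfl⟩)

lemma linearIndependent_powers {X : Type*} [Fintype X] [DecidableEq X] {d : ℕ}
    (B : Matrix X X ℂ) (hspec : (spectrum ℂ B).ncard = d + 1) :
    LinearIndependent ℂ (fun i : Fin (d + 1) => B ^ (i : ℕ)) := by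
  rw [Fintype.linearIndependent_iff]
  intro g hg
  set p : ℂ[X] := ∑ i : Fin (d + 1), Polynomial.monomial (i : ℕ) (g i) with hp
  have hpB : Polynomial.aeval B p = 0 := by
    simpa [hp, Polynomial.aeval_monomial, Algebra.smul_def] using hg
  have hdeg : p.degree < ((d + 1 : ℕ) : WithBot ℕ) := by
    refine (Polynomial.degree_sum_le _ _).trans_lt ?_
    rw [Finset.sup_lt_iff (WithBot.bot_lt_coe _)]
    intro i _
    exact (Polynomial.degree_monomial_le _ _).trans_lt (by exact_mod_cast i.2)
  have hfin : (spectrum ℂ B).Finite := Set.finite_of_ncard_ne_zero (by omega)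
  have hne : Nontrivial (Matrix X X ℂ) := by
    by_contra h
    rw [not_nontrivial_iff_subsingleton] at h
    rw [spectrum.of_subsingleton] at hspec
    simp at hspec
  have hroot : ∀ z ∈ spectrum ℂ B, p.eval z = 0 := by
    intro z hz
    have := spectrum.subset_polynomial_aeval B p ⟨z, hz, rfl⟩
    rw [hpB, spectrum.zero_eq] at this
    simpa using this
  have hp0 : p = 0 := by
    refine Polynomial.eq_zero_of_degree_lt_of_eval_finset_eq_zero hfin.toFinset ?_ ?_
    · rw [← Set.ncard_eq_toFinset_card _ hfin, hspec]; exact hdeg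
    · intro z hz; exact hroot z (by simpa using hz)
  intro i
  have hc : p.coeff i = g i := by
    simp only [hp, Polynomial.finset_sum_coeff, Polynomial.coeff_monomial]
    rw [Finset.sum_eq_single i]
    · simp
    · intro b _ hb; rw [if_neg]; exact fun h => hb (Fin.ext h)
    · simp
  rw [← hc, hp0, Polynomial.coeff_zero]

/-- If `B` is a normal 0-1 matrix with a strongly connected digraph and
exactly `d+1` distinct eigenvalues, the set `Δ` of two-sided distance
patterns has `d+1` elements, and the number of walks of any length `ℓ` from
`x` to `y` depends only on `(∂(x,y), ∂(y,x))`, then the relations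
`R_p` (`p ∈ Δ`) form a commutative `d`-class association scheme whose
Bose–Mesner algebra is spanned by `B^0, …, B^d`. -/
theorem stmt_19 {X : Type*} [Fintype X] [DecidableEq X] [Nonempty X] {d : ℕ}
    (B : Matrix X X ℂ)
    (h01 : ∀ x y, B x y = 0 ∨ B x y = 1)
    (hconn : ∀ x y : X, ∃ ℓ : ℕ, (B ^ ℓ) x y ≠ 0)
    (hspec : (spectrum ℂ B).ncard = d + 1)
    (hnormal : B * Bᵀ = Bᵀ * B)
    (hΔ : (Finset.image (fun q : X × X => pat B q.1 q.2) Finset.univ).card = d + 1)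
    (hwalk : ∀ (ℓ : ℕ) (x y u v : X), pat B x y = pat B u v →
      (B ^ ℓ) x y = (B ^ ℓ) u v) :
    patMatrix B (0, 0) = 1 ∧
    (∑ p ∈ Finset.image (fun q : X × X => pat B q.1 q.2) Finset.univ,
        patMatrix B p) = allOnes X ∧
    (∀ p ∈ Finset.image (fun q : X × X => pat B q.1 q.2) Finset.univ,
      ∃ q ∈ Finset.image (fun q : X × X => pat B q.1 q.2) Finset.univ,
        (patMatrix B p)ᵀ = patMatrix B q) ∧
    (∀ p ∈ Finset.image (fun q : X × X => pat B q.1 q.2) Finset.univ,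
      ∀ q ∈ Finset.image (fun q : X × X => pat B q.1 q.2) Finset.univ,
        patMatrix B p * patMatrix B q ∈
          Submodule.span ℂ (patMatrix B ''
            ↑(Finset.image (fun q : X × X => pat B q.1 q.2) Finset.univ))) ∧
    (∀ p ∈ Finset.image (fun q : X × X => pat B q.1 q.2) Finset.univ,
      ∀ q ∈ Finset.image (fun q : X × X => pat B q.1 q.2) Finset.univ,
        patMatrix B p * patMatrix B q = patMatrix B q * patMatrix B p) ∧
    Submodule.span ℂ (patMatrix B ''
        ↑(Finset.image (fun q : X × X => pat B q.1 q.2) Finset.univ)) =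
      Submodule.span ℂ (Set.range fun i : Fin (d + 1) => B ^ (i : ℕ)) := by
  classical
  have hmemD : ∀ x y : X, pat B x y ∈
      Finset.image (fun q : X × X => pat B q.1 q.2) Finset.univ :=
    fun x y => Finset.mem_image.2 ⟨(x, y), Finset.mem_univ _, rfl⟩
  have hpow : ∀ ℓ : ℕ, B ^ ℓ ∈ Submodule.span ℂ (patMatrix B ''
      ↑(Finset.image (fun q : X × X => pat B q.1 q.2) Finset.univ)) :=
    fun ℓ => mem_span_patMatrix B _ (hwalk ℓ)
  have hspan : Submodule.span ℂ (patMatrix B ''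
        ↑(Finset.image (fun q : X × X => pat B q.1 q.2) Finset.univ)) =
      Submodule.span ℂ (Set.range fun i : Fin (d + 1) => B ^ (i : ℕ)) := by
    symm
    apply Submodule.eq_of_le_of_finrank_le
    · rw [Submodule.span_le]
      rintro _ ⟨i, rfl⟩
      exact hpow i
    · rw [finrank_span_eq_card (linearIndependent_powers B hspec), Fintype.card_fin, ← hΔ,
        ← Finset.coe_image]
      exact (finrank_span_finset_le_card _).trans Finset.card_image_le
  have hpoly : ∀ p ∈ Finset.image (fun q : X × X => pat B q.1 q.2) Finset.univ,
      ∃ f : ℂ[X], Polynomial.aeval B f = patMatrix B p := by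
    intro p hp
    have h1 : patMatrix B p ∈ Submodule.span ℂ
        (Set.range fun i : Fin (d + 1) => B ^ (i : ℕ)) := by
      rw [← hspan]; exact Submodule.subset_span ⟨p, hp, rfl⟩
    have h2 : Submodule.span ℂ (Set.range fun i : Fin (d + 1) => B ^ (i : ℕ)) ≤
        LinearMap.range (Polynomial.aeval (R := ℂ) B).toLinearMap := by
      rw [Submodule.span_le]
      rintro _ ⟨i, rfl⟩
      exact ⟨Polynomial.X ^ (i : ℕ), by simp⟩
    exact h2 h1
  have hb0 : ∀ x y, bdist B x y = 0 ↔ x = y := by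
    intro x y
    constructor
    · intro h
      have := Nat.sInf_mem (s := {ℓ : ℕ | (B ^ ℓ) x y ≠ 0}) (hconn x y)
      have h' : sInf {ℓ : ℕ | (B ^ ℓ) x y ≠ 0} = 0 := h
      rw [h'] at this
      by_contra hne
      simp [Matrix.one_apply_ne hne] at this
    · rintro rfl
      exact Nat.sInf_eq_zero.2 (Or.inl (by simp))
  refine ⟨?_, ?_, ?_, ?_, ?_, hspan⟩
  · ext x y
    by_cases h : x = y
    · subst h
      simp [patMatrix, pat, (hb0 x x).2 rfl]
    · simp [patMatrix, pat, hb0, h]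
  · ext x y
    simp only [Matrix.sum_apply, patMatrix, Matrix.of_apply, allOnes, Finset.sum_ite_eq,
      hmemD x y, if_true]
  · intro p hp
    obtain ⟨⟨x, y⟩, -, rfl⟩ := Finset.mem_image.1 hp
    refine ⟨pat B y x, hmemD y x, ?_⟩
    ext u v
    simp only [patMatrix, Matrix.transpose_apply, Matrix.of_apply, pat, Prod.mk.injEq]
    congr 1
    exact propext and_comm
  · intro p hp q hq
    obtain ⟨f, hf⟩ := hpoly p hp
    obtain ⟨g, hg⟩ := hpoly q hq
    rw [← hf, ← hg, ← map_mul, Polynomial.aeval_eq_sum_range]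
    exact Submodule.sum_mem _ fun i _ => Submodule.smul_mem _ _ (hpow i)
  · intro p hp q hq
    obtain ⟨f, hf⟩ := hpoly p hp
    obtain ⟨g, hg⟩ := hpoly q hq
    rw [← hf, ← hg, ← map_mul, ← map_mul, mul_comm]
end
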